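/- Let p ≥ 1 and n ≥ 1 be integers, define h_p : ℝ → ℝ by h_p(x) = max(0, p·x) + Σ_{i=2}^{p} (−1)^{i−1}·max(0, 2p·x − 2(i−1)), and define H_p : ℝⁿ → ℝⁿ coordinatewise by (H_p(x))_j = h_p(x_j). Then for every function t : {1,…,n} → {0,…,p−1}, there exists an affine map A : ℝⁿ → ℝⁿ such that H_p(x) = A(x) for all x in the hypercube ∏_{j=1}^{n} [t_j/p, (t_j+1)/p], and the image of this hypercube under H_p equals [0, 1]ⁿ. -/

import Mathlib

/-- The one-dimensional sawtooth map from the proof of Lemma 2: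
`h_p(x) = max(0, p·x) + Σ_{i=2}^{p} (−1)^{i−1} · max(0, 2p·x − 2(i−1))`. -/
noncomputable def sawtooth (p : ℕ) (x : ℝ) : ℝ :=
  max 0 (p * x) + ∑ i ∈ Finset.Icc 2 p, (-1 : ℝ) ^ (i - 1) * max 0 (2 * p * x - 2 * ((i : ℝ) - 1))

/-- The `n`-dimensional sawtooth layer, applying `h_p` to each coordinate. -/
noncomputable def sawtoothLayer (p n : ℕ) (x : Fin n → ℝ) : Fin n → ℝ :=
  fun j => sawtooth p (x j)

theorem sawtooth_sum_aux (y : ℝ) (t : ℕ) :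
    y + ∑ i ∈ Finset.Icc 2 (t + 1), (-1 : ℝ) ^ (i - 1) * (2 * y - 2 * ((i : ℝ) - 1))
      = 1 / 2 + (-1 : ℝ) ^ t * (y - t - 1 / 2) := by
  induction t with
  | zero => simp
  | succ k ih =>
    rw [Finset.sum_Icc_succ_top (by omega), ← add_assoc, ih]
    simp only [Nat.add_sub_cancel]
    push_cast
    ring

theorem sawtooth_eq_aux (p : ℕ) (hp : 1 ≤ p) (t : ℕ) (ht : t ≤ p - 1) (x : ℝ)
    (hx : x ∈ Set.Icc ((t : ℝ) / p) (((t : ℝ) + 1) / p)) :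
    sawtooth p x = 1 / 2 + (-1 : ℝ) ^ t * (p * x - t - 1 / 2) := by
  have hp0 : (0 : ℝ) < p := by exact_mod_cast hp
  obtain ⟨h1, h2⟩ := hx
  rw [div_le_iff₀ hp0] at h1
  rw [le_div_iff₀ hp0] at h2
  have ht0 : (0 : ℝ) ≤ t := Nat.cast_nonneg t
  rw [← sawtooth_sum_aux, sawtooth, max_eq_right (by linarith)]
  congr 1
  symm
  rw [← Finset.sum_subset (Finset.Icc_subset_Icc_right (show t + 1 ≤ p by omega))
    (f := fun i : ℕ => (-1 : ℝ) ^ (i - 1) * max 0 (2 * p * x - 2 * ((i : ℝ) - 1)))]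
  · refine Finset.sum_congr rfl fun i hi => ?_
    have : (i : ℝ) ≤ t + 1 := by exact_mod_cast (Finset.mem_Icc.mp hi).2
    rw [max_eq_right (by linarith)]
    ring
  · intro i hi hi'
    simp only [Finset.mem_Icc] at hi hi'
    have : (t : ℝ) + 2 ≤ i := by exact_mod_cast (show t + 2 ≤ i by omega)
    rw [max_eq_left (by linarith), mul_zero]


/-- The `n`-dimensional sawtooth layer `H_p` is affine on each hypercube
`∏_j [t_j/p, (t_j+1)/p]` (for `t_j ∈ {0, …, p−1}`) and identifies each such hypercube onto
the common image `[0, 1]ⁿ`. -/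
theorem sawtoothLayer_affine_and_image (p : ℕ) (hp : 1 ≤ p) (n : ℕ) (hn : 1 ≤ n) :
    ∀ t : Fin n → ℕ, (∀ j, t j ≤ p - 1) →
      ∃ A : (Fin n → ℝ) →ᵃ[ℝ] (Fin n → ℝ),
        (∀ x ∈ Set.pi Set.univ (fun j => Set.Icc ((t j : ℝ) / p) (((t j : ℝ) + 1) / p)),
          sawtoothLayer p n x = A x) ∧
        sawtoothLayer p n '' Set.pi Set.univ (fun j => Set.Icc ((t j : ℝ) / p) (((t j : ℝ) + 1) / p))
          = Set.pi Set.univ (fun _ => Set.Icc (0 : ℝ) 1) := by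
  intro t ht
  have hp0 : (0 : ℝ) < p := by exact_mod_cast hp
  refine ⟨(LinearMap.pi fun j => ((-1 : ℝ) ^ t j * p) •
      (LinearMap.proj j : (Fin n → ℝ) →ₗ[ℝ] ℝ)).toAffineMap +
    AffineMap.const ℝ (Fin n → ℝ) (fun j => 1 / 2 + (-1 : ℝ) ^ t j * (-(t j : ℝ) - 1 / 2)),
    ?_, ?_⟩
  · intro x hx
    funext j
    rw [sawtoothLayer, sawtooth_eq_aux p hp (t j) (ht j) (x j) (hx j trivial)]
    simp
    ring
  · ext z
    simp only [Set.mem_image]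
    constructor
    · rintro ⟨x, hx, rfl⟩ j -
      have hj := hx j trivial
      simp only [sawtoothLayer]
      rw [sawtooth_eq_aux p hp (t j) (ht j) (x j) hj]
      obtain ⟨h1, h2⟩ := hj
      rw [div_le_iff₀ hp0] at h1
      rw [le_div_iff₀ hp0] at h2
      rcases neg_one_pow_eq_or ℝ (t j) with h | h <;> rw [h] <;> constructor <;> linarith
    · intro hz
      have hx : ∀ j, (t j + 1 / 2 + (-1 : ℝ) ^ t j * (z j - 1 / 2)) / p ∈
          Set.Icc ((t j : ℝ) / p) (((t j : ℝ) + 1) / p) := by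
        intro j
        obtain ⟨h1, h2⟩ := hz j trivial
        constructor <;> refine div_le_div_of_nonneg_right ?_ hp0.le <;>
        rcases neg_one_pow_eq_or ℝ (t j) with h | h <;> rw [h] <;> linarith
      refine ⟨fun j => (t j + 1 / 2 + (-1 : ℝ) ^ t j * (z j - 1 / 2)) / p,
        fun j _ => hx j, ?_⟩
      funext j
      simp only [sawtoothLayer]
      rw [sawtooth_eq_aux p hp (t j) (ht j) _ (hx j), mul_div_cancel₀ _ hp0.ne']
      rcases neg_one_pow_eq_or ℝ (t j) with h | h <;> rw [h] <;> ring
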